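/- Let R be a commutative noetherian ring, M a finitely generated R-module with R ∈ add M that is d-torsionfree, and X a finitely generated R-module with grade_R X > c for some 0 ≤ c < d. If End_R(M) and End_R(X) have finite global dimension, then End_R(M ⊕ Ω^c X) has global dimension at most 2·gldim End_R(M) + gldim End_R(X) + 1; in particular it is finite. -/

import Mathlib

open CategoryTheory
universe u
noncomputable section

/-- A linear map factors through a projective module. -/
def FactorsThroughProjective {R : Type u} [Ring R] {M N : Type u}
    [AddCommGroup M] [AddCommGroup N] [Module R M] [Module R N] (f : M →ₗ[R] N) : Prop :=
  ∃ (P : Type u) (_ : AddCommGroup P) (_ : Module R P), Module.Projective R P ∧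
    ∃ (g : M →ₗ[R] P) (h : P →ₗ[R] N), h.comp g = f

/-- `Ext^i_R(X, Y) = 0`. -/
def extZero (R : Type u) [CommRing R] (i : ℕ) (X Y : ModuleCat.{u} R) : Prop :=
  Subsingleton (((Ext R (ModuleCat.{u} R) i).obj (Opposite.op X)).obj Y)

/-- `Y` is an `n`-th syzygy of `N` (via finitely generated projective modules). -/
def IsSyzygy (R : Type u) [CommRing R] : ℕ → ModuleCat.{u} R → ModuleCat.{u} R → Prop
  | 0, Y, N => Nonempty (Y ≅ N)
  | n+1, Y, N => ∃ (P K : ModuleCat.{u} R) (i : Y ⟶ P) (p : P ⟶ K),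
      Projective P ∧ Module.Finite R P ∧ Function.Injective i ∧ Function.Surjective p ∧
      Function.Exact i p ∧ IsSyzygy R n K N

/-- projective dimension at most `n` -/
def pdLE (A : Type u) [Ring A] : ℕ → ModuleCat.{u} A → Prop
  | 0, M => Projective M
  | n+1, M => Projective M ∨ ∃ (K P : ModuleCat.{u} A) (i : K ⟶ P) (p : P ⟶ M),
      Projective P ∧ Function.Injective i ∧ Function.Surjective p ∧
      Function.Exact i p ∧ pdLE A n K

/-- global dimension at most `n` -/
def gldimLE (A : Type u) [Ring A] (n : ℕ) : Prop := ∀ M : ModuleCat.{u} A, pdLE A n M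

/-- `M` is `d`-torsionfree: it is a `d`-th syzygy of a finitely generated module `N`
with `Ext^i(N,R) = 0` for `1 ≤ i ≤ d`. -/
def IsTorsionFree (R : Type u) [CommRing R] (d : ℕ) (M : ModuleCat.{u} R) : Prop :=
  ∃ N : ModuleCat.{u} R, Module.Finite R N ∧
    (∀ i, 1 ≤ i → i ≤ d → extZero R i N (ModuleCat.of R R)) ∧ IsSyzygy R d M N

/-- `N` lies in `add M`: it is a direct summand of a finite direct sum of copies of `M`. -/
def MemAdd (R : Type u) [CommRing R] (M N : ModuleCat.{u} R) : Prop :=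
  ∃ (k : ℕ) (i : N →ₗ[R] (Fin k → M)) (p : (Fin k → M) →ₗ[R] N), p.comp i = LinearMap.id

/-! Put `V = M ⊕ W` with `W = Ω^c X`, let `A = End_R(V)` and let `e ∈ A` be the projection onto
`M`, so that `eAe ≅ End_R(M)`. The Yoneda class `θ ∈ Ext^c(X, W)` of the syzygy sequence identifies
`Ext^c(X, V)` with `End_R(X)`, and the action of `A` on it yields a surjective ring homomorphism
`A → End_R(X)` with kernel `AeA`: a map out of `W` killed by `θ` factors through a free module,
hence through `add M`.

Applying `Hom_R(-, V)` to the syzygy sequence gives an exact sequence of `A`-modules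
`0 → Hom(P₀, V) → ⋯ → Hom(P_{c-1}, V) → Hom(W, V) → End_R(X) → 0` in which `Hom(W, V)` is
projective and the `Hom(P_i, V)` are projectives determined by the `eAe`-modules `e Hom(P_i, V)`;
it shows that `End_R(X)` has projective dimension at most `gldim End_R(M)` over `A`. An `A`-module
`F` is approximated by projectives of this kind up to modules killed by `e`, that is,
`End_R(X)`-modules, and the projective dimensions of the two sorts of modules add up to the
bound. -/

/-- `ProjDimLE A F n` says that the `A`-module `F` has projective dimension at most `n`. It is
Mathlib's `HasProjectiveDimensionLE` for an unbundled module. -/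
abbrev ProjDimLE (A : Type u) [Ring A] (F : Type u) [AddCommGroup F] [Module A F] (n : ℕ) : Prop :=
  HasProjectiveDimensionLE (ModuleCat.of A F) n

section ProjDimLE

variable {A : Type u} [Ring A] {F G H : Type u} [AddCommGroup F] [Module A F]
  [AddCommGroup G] [Module A G] [AddCommGroup H] [Module A H] {n : ℕ}

lemma projDimLE_zero_iff : ProjDimLE A F 0 ↔ Module.Projective A F := by
  rw [IsProjective.iff_projective]
  exact (projective_iff_hasProjectiveDimensionLE_zero (ModuleCat.of A F)).symm

lemma ProjDimLE.mono {m : ℕ} (h : ProjDimLE A F m) (hmn : m ≤ n) : ProjDimLE A F n :=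
  have := h
  hasProjectiveDimensionLT_of_ge _ (m + 1) (n + 1) (by lia)

lemma ProjDimLE.of_projective (h : Module.Projective A F) (n : ℕ) : ProjDimLE A F n :=
  (projDimLE_zero_iff.2 h).mono n.zero_le

lemma ProjDimLE.of_retract {i : F →ₗ[A] G} {p : G →ₗ[A] F} (h : p ∘ₗ i = .id)
    (hG : ProjDimLE A G n) : ProjDimLE A F n :=
  have := hG
  Retract.hasProjectiveDimensionLT (Y := ModuleCat.of A G)
    ⟨ModuleCat.ofHom i, ModuleCat.ofHom p, by rw [← ModuleCat.ofHom_comp, h]; rfl⟩ (n + 1)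

lemma shortExact_ofHom {f : F →ₗ[A] G} {g : G →ₗ[A] H} (hf : Function.Injective f)
    (hg : Function.Surjective g) (h : Function.Exact f g) :
    (ModuleCat.shortComplexOfCompEqZero f g h.linearMap_comp_eq_zero).ShortExact :=
  ModuleCat.shortComplex_shortExact _ h hf hg

lemma ProjDimLE.left {f : F →ₗ[A] G} {g : G →ₗ[A] H} (hf : Function.Injective f)
    (hg : Function.Surjective g) (h : Function.Exact f g) (hG : ProjDimLE A G n)
    (hH : ProjDimLE A H (n + 1)) : ProjDimLE A F n :=
  (shortExact_ofHom hf hg h).hasProjectiveDimensionLT_X₁ (n + 1) hG hH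

lemma ProjDimLE.middle {f : F →ₗ[A] G} {g : G →ₗ[A] H} (hf : Function.Injective f)
    (hg : Function.Surjective g) (h : Function.Exact f g) (hF : ProjDimLE A F n)
    (hH : ProjDimLE A H n) : ProjDimLE A G n :=
  (shortExact_ofHom hf hg h).hasProjectiveDimensionLT_X₂ (n + 1) hF hH

lemma ProjDimLE.right {f : F →ₗ[A] G} {g : G →ₗ[A] H} (hf : Function.Injective f)
    (hg : Function.Surjective g) (h : Function.Exact f g) (hF : ProjDimLE A F n)
    (hG : ProjDimLE A G (n + 1)) : ProjDimLE A H (n + 1) :=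
  (shortExact_ofHom hf hg h).hasProjectiveDimensionLT_X₃ (n + 1) hF hG

lemma ProjDimLE.ker {g : G →ₗ[A] H} (hg : Function.Surjective g) (hG : Module.Projective A G)
    (hH : ProjDimLE A H (n + 1)) : ProjDimLE A (LinearMap.ker g) n :=
  .left Subtype.val_injective hg g.exact_subtype_ker_map (.of_projective hG n) hH

lemma ProjDimLE.of_ker {g : G →ₗ[A] H} (hg : Function.Surjective g)
    (hG : ProjDimLE A G (n + 1)) (hK : ProjDimLE A (LinearMap.ker g) n) : ProjDimLE A H (n + 1) :=
  .right Subtype.val_injective hg g.exact_subtype_ker_map hK hG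

lemma pdLE_iff_projDimLE {F : ModuleCat.{u} A} : pdLE A n F ↔ ProjDimLE A F n := by
  induction n generalizing F with
  | zero => rw [projDimLE_zero_iff, pdLE, IsProjective.iff_projective]
  | succ n ih =>
    constructor
    · rintro (hF | ⟨K, P, i, p, hP, hi, hp, hip, hK⟩)
      · exact .of_projective ((IsProjective.iff_projective F).2 hF) _
      · exact .right (f := i.hom) (g := p.hom) hi hp hip (ih.1 hK)
          (.of_projective ((IsProjective.iff_projective P).2 hP) _)
    · intro hF
      let g := Finsupp.linearCombination A (id : F → F)
      have hg : Function.Surjective g := Finsupp.linearCombination_id_surjective A F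
      have hP : Module.Projective A (F →₀ A) := inferInstance
      exact .inr ⟨.of A (LinearMap.ker g), .of A (F →₀ A),
        ModuleCat.ofHom (LinearMap.ker g).subtype, ModuleCat.ofHom g,
        (IsProjective.iff_projective _).1 hP, Subtype.val_injective, hg,
        g.exact_subtype_ker_map, ih.2 (.ker hg hP hF)⟩

lemma gldimLE.projDimLE (h : gldimLE A n) (F : Type u) [AddCommGroup F] [Module A F] :
    ProjDimLE A F n :=
  pdLE_iff_projDimLE.1 (h (.of A F))

lemma exact_mapRange_linearMap (I : Type*) {f : F →ₗ[A] G} {g : G →ₗ[A] H}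
    (hf : Function.Injective f) (h : Function.Exact f g) :
    Function.Exact (Finsupp.mapRange.linearMap (α := I) f) (Finsupp.mapRange.linearMap g) := by
  rw [LinearMap.exact_iff, Finsupp.ker_mapRange,
    Finsupp.range_mapRange_linearMap _ (LinearMap.ker_eq_bot.2 hf), h.linearMap_ker_eq]

lemma ProjDimLE.finsupp (I : Type u) (h : ProjDimLE A F n) : ProjDimLE A (I →₀ F) n := by
  induction n generalizing F with
  | zero =>
    rw [projDimLE_zero_iff] at *
    classical exact .of_equiv (finsuppLequivDFinsupp A).symm
  | succ n ih =>
    let g := Finsupp.linearCombination A (id : F → F)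
    have hg : Function.Surjective g := Finsupp.linearCombination_id_surjective A F
    refine .right (G := I →₀ F →₀ A)
      (f := Finsupp.mapRange.linearMap (LinearMap.ker g).subtype)
      (g := Finsupp.mapRange.linearMap g) ?_ ?_ ?_ (ih (.ker hg inferInstance h))
      (.of_projective inferInstance _)
    · exact Finsupp.mapRange_injective _ (map_zero _) Subtype.val_injective
    · exact Finsupp.mapRange_surjective _ (map_zero _) hg
    · exact exact_mapRange_linearMap I Subtype.val_injective g.exact_subtype_ker_map

end ProjDimLE

section ChangeOfRings

variable {A C : Type u} [Ring A] [Ring C] [Module A C] [IsScalarTower A C C]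

lemma ProjDimLE.restrictScalars {q n : ℕ} (hC : ProjDimLE A C q) {H : Type u} [AddCommGroup H]
    [Module A H] [Module C H] [IsScalarTower A C H] (hH : ProjDimLE C H n) :
    ProjDimLE A H (n + q) := by
  induction n generalizing H with
  | zero =>
    obtain ⟨s, hs⟩ := Module.projective_def'.1 (projDimLE_zero_iff.1 hH)
    rw [zero_add]
    exact .of_retract (i := s.restrictScalars A)
      (p := (Finsupp.linearCombination C (id : H → H)).restrictScalars A)
      (LinearMap.ext fun x ↦ LinearMap.congr_fun hs x) (hC.finsupp H)
  | succ n ih =>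
    let g := Finsupp.linearCombination C (id : H → H)
    have hg : Function.Surjective g := Finsupp.linearCombination_id_surjective C H
    have hK : ProjDimLE A (LinearMap.ker g) (n + q) := ih (.ker hg inferInstance hH)
    rw [add_right_comm]
    exact .of_ker (g := g.restrictScalars A) hg ((hC.finsupp H).mono (by lia)) hK

end ChangeOfRings

lemma gldimLE.of_ringEquiv {A B : Type u} [Ring A] [Ring B] (e : A ≃+* B) {n : ℕ}
    (h : gldimLE B n) : gldimLE A n := by
  intro F
  let : Module B F := Module.compHom F e.symm.toRingHom
  have := RingHomInvPair.of_ringEquiv e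
  have := RingHomInvPair.of_ringEquiv_symm e
  have := h.projDimLE F
  let φ : ModuleCat.of B F ≃ₛₗ[RingHomClass.toRingHom e.symm] F :=
    { AddEquiv.refl F with map_smul' := fun _ _ ↦ rfl }
  exact pdLE_iff_projDimLE.2 (ModuleCat.hasProjectiveDimensionLE_of_semiLinearEquiv e.symm φ n)

section CornerPart

variable {A : Type u} [Ring A] {e : A}

/-- The part `eF` of an `A`-module `F`, for an idempotent `e`; it is a module over the corner
ring `eAe`. -/
def cornerPart (e : A) (F : Type u) [AddCommGroup F] [Module A F] : AddSubgroup F where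
  carrier := {x | e • x = x}
  add_mem' hx hy := (smul_add e _ _).trans (congrArg₂ _ hx hy)
  zero_mem' := smul_zero e
  neg_mem' hx := (smul_neg e _).trans (congrArg _ hx)

/-- The additive map `a ↦ eae` from a ring to its corner ring. -/
def cornerCoeff (he : IsIdempotentElem e) : A →+ he.Corner where
  toFun a := ⟨e * a * e, a, rfl⟩
  map_zero' := Subtype.ext <| show e * 0 * e = 0 by simp only [mul_zero, zero_mul]
  map_add' a b := Subtype.ext <| show e * (a + b) * e = e * a * e + e * b * e by
    simp only [mul_add, add_mul]

variable {F G H : Type u} [AddCommGroup F] [Module A F] [AddCommGroup G] [Module A G]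
  [AddCommGroup H] [Module A H] (he : IsIdempotentElem e)

lemma mul_corner (b : he.Corner) : e * b.1 = b.1 := ((Subsemigroup.mem_corner_iff he).1 b.2).1

lemma corner_mul (b : he.Corner) : b.1 * e = b.1 := ((Subsemigroup.mem_corner_iff he).1 b.2).2

lemma cornerCoeff_mul (b : he.Corner) (a : A) :
    cornerCoeff he (b.1 * a) = b * cornerCoeff he a :=
  Subtype.ext <| calc
    e * (b.1 * a) * e = b.1 * a * e := by rw [← mul_assoc, mul_corner]
    _ = b.1 * (e * a * e) := by rw [← mul_assoc, ← mul_assoc, corner_mul]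

lemma smul_mem_cornerPart {a : A} (ha : e * a = a) (x : F) : a • x ∈ cornerPart e F := by
  change e • a • x = a • x
  rw [smul_smul, ha]

instance : Module he.Corner (cornerPart e F) where
  smul b x := ⟨b.1 • x, smul_mem_cornerPart (mul_corner he b) x.1⟩
  one_smul x := Subtype.ext x.2
  mul_smul b c x := Subtype.ext (mul_smul b.1 c.1 x.1)
  smul_zero b := Subtype.ext (smul_zero b.1)
  smul_add b x y := Subtype.ext (smul_add b.1 x.1 y.1)
  add_smul b c x := Subtype.ext (add_smul b.1 c.1 x.1)
  zero_smul x := Subtype.ext (zero_smul A x.1)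

/-- The `eAe`-linear map `eF → eG` induced by an `A`-linear map `F → G`. -/
def cornerPartMap (f : F →ₗ[A] G) : cornerPart e F →ₗ[he.Corner] cornerPart e G where
  toFun x := ⟨f x, (map_smul f e x.1).symm.trans (congrArg f x.2)⟩
  map_add' x y := Subtype.ext (map_add f x.1 y.1)
  map_smul' b x := Subtype.ext (map_smul f b.1 x.1)

lemma cornerPartMap_injective {f : F →ₗ[A] G} (hf : Function.Injective f) :
    Function.Injective (cornerPartMap he f) :=
  fun _ _ h ↦ Subtype.ext (hf (congrArg Subtype.val h))

lemma cornerPartMap_surjective {f : F →ₗ[A] G} (hf : Function.Surjective f) :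
    Function.Surjective (cornerPartMap he f) := by
  intro y
  obtain ⟨x, hx⟩ := hf y
  refine ⟨⟨e • x, smul_mem_cornerPart he x⟩, Subtype.ext ?_⟩
  exact (map_smul f e x).trans (hx ▸ y.2)

lemma exact_cornerPartMap {f : F →ₗ[A] G} {g : G →ₗ[A] H} (hf : Function.Injective f)
    (h : Function.Exact f g) : Function.Exact (cornerPartMap he f) (cornerPartMap he g) := by
  intro y
  constructor
  · intro hy
    obtain ⟨x, hx⟩ := (h y).1 (congrArg Subtype.val hy)
    exact ⟨⟨x, hf ((map_smul f e x).trans (hx ▸ y.2))⟩, Subtype.ext hx⟩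
  · rintro ⟨x, rfl⟩
    exact Subtype.ext (h.apply_apply_eq_zero x.1)

lemma coe_linearCombination_mapRange_cornerCoeff {ι : Type*} (v : ι → cornerPart e F)
    {s : ι →₀ A} (hs : e • s = s) :
    (Finsupp.linearCombination he.Corner v (s.mapRange (cornerCoeff he) (map_zero _)) : F) =
      Finsupp.linearCombination A (fun i ↦ (v i : F)) s := by
  rw [Finsupp.linearCombination_apply, Finsupp.linearCombination_apply,
    Finsupp.sum_mapRange_index fun i ↦ zero_smul he.Corner (v i), Finsupp.sum, Finsupp.sum,
    AddSubgroup.val_finsetSum]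
  refine Finset.sum_congr rfl fun i _ ↦ ?_
  have hsi : e * s i = s i := DFunLike.congr_fun hs i
  calc (e * s i * e) • (v i : F) = s i • e • (v i : F) := by rw [hsi, mul_smul]
    _ = s i • (v i : F) := congrArg _ (v i).2

/-- The `A`-module `T` lies in `Add (Ae)`: it is projective and generated by `eT`. -/
structure IsCornerProjective (e : A) (T : Type u) [AddCommGroup T] [Module A T] : Prop where
  projective : Module.Projective A T
  span_cornerPart : Submodule.span A (cornerPart e T : Set T) = ⊤

namespace IsCornerProjective

variable {T : Type u} [AddCommGroup T] [Module A T] (hT : IsCornerProjective e T)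
include hT

lemma hom_ext {f g : T →ₗ[A] F} (h : ∀ x ∈ cornerPart e T, f x = g x) : f = g :=
  LinearMap.ext_on hT.span_cornerPart h

lemma exists_coordinates : ∃ σ : T →ₗ[A] cornerPart e T →₀ A,
    Finsupp.linearCombination A (Subtype.val : cornerPart e T → T) ∘ₗ σ = .id := by
  have := hT.projective
  refine Module.projective_lifting_property _ _ (LinearMap.range_eq_top.1 ?_)
  rw [Finsupp.range_linearCombination, ← hT.span_cornerPart, Subtype.range_coe]

lemma exists_lift (g : cornerPart e T →ₗ[he.Corner] cornerPart e F) :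
    ∃ f : T →ₗ[A] F, cornerPartMap he f = g := by
  obtain ⟨σ, hσ⟩ := hT.exists_coordinates
  refine ⟨Finsupp.linearCombination A (fun t ↦ (g t : F)) ∘ₗ σ, LinearMap.ext fun x ↦ ?_⟩
  have hx : e • σ x = σ x := (map_smul σ e x.1).symm.trans (congrArg σ x.2)
  let s : cornerPart e T →₀ he.Corner := (σ x).mapRange (cornerCoeff he) (map_zero _)
  have hs : Finsupp.linearCombination he.Corner id s = x :=
    Subtype.ext <| (coe_linearCombination_mapRange_cornerCoeff he id hx).trans
      (LinearMap.congr_fun hσ x.1)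
  have hgs : g x = Finsupp.linearCombination he.Corner g s := by
    conv_lhs => rw [← hs]
    exact Finsupp.apply_linearCombination _ _ _ _
  exact Subtype.ext <| (coe_linearCombination_mapRange_cornerCoeff he g hx).symm.trans
    (congrArg Subtype.val hgs.symm)

lemma projective_cornerPart : Module.Projective he.Corner (cornerPart e T) := by
  obtain ⟨σ, hσ⟩ := hT.exists_coordinates
  let τ : cornerPart e T →ₗ[he.Corner] cornerPart e T →₀ he.Corner :=
    { toFun x := (σ x).mapRange (cornerCoeff he) (map_zero _)
      map_add' x y := by
        rw [AddSubgroup.coe_add, map_add, Finsupp.mapRange_add (map_add _)]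
      map_smul' b x := Finsupp.ext fun t ↦
        (congrArg (fun s : _ →₀ A ↦ cornerCoeff he (s t)) (map_smul σ b.1 x.1)).trans
          (cornerCoeff_mul he b _) }
  refine Module.projective_def.2 ⟨τ, fun x ↦ Subtype.ext ?_⟩
  have hx : e • σ x = σ x := (map_smul σ e x.1).symm.trans (congrArg σ x.2)
  exact (coe_linearCombination_mapRange_cornerCoeff he id hx).trans (LinearMap.congr_fun hσ x.1)

end IsCornerProjective

end CornerPart

section Recollement

variable {A : Type u} [Ring A] {e : A} (he : IsIdempotentElem e)
  {F T : Type u} [AddCommGroup F] [Module A F] [AddCommGroup T] [Module A T]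

lemma rangeRestrict_apply_of_comp_self {ε : T →ₗ[A] T} (hε : ε ∘ₗ ε = ε)
    (x : LinearMap.range ε) : ε.rangeRestrict x.1 = x := by
  obtain ⟨_, y, rfl⟩ := x
  exact Subtype.ext (LinearMap.congr_fun hε y)

lemma projective_range_of_comp_self [Module.Projective A T] {ε : T →ₗ[A] T}
    (hε : ε ∘ₗ ε = ε) : Module.Projective A (LinearMap.range ε) :=
  .of_split (LinearMap.range ε).subtype ε.rangeRestrict
    (LinearMap.ext (rangeRestrict_apply_of_comp_self hε))

variable (F) in
lemma exists_cornerProjective_cover : ∃ (T : ModuleCat.{u} A) (f : T →ₗ[A] F),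
    IsCornerProjective e T ∧ Function.Surjective (cornerPartMap he f) := by
  let ρ : (F →₀ A) →ₗ[A] F →₀ A :=
    Finsupp.mapRange.linearMap (LinearMap.toSpanSingleton A A e)
  have hρ (x : F) (a : A) : ρ (.single x a) = .single x (a * e) :=
    Finsupp.mapRange_single (hf := map_zero _)
  have hρρ : ρ ∘ₗ ρ = ρ := by
    refine Finsupp.lhom_ext fun x a ↦ ?_
    rw [LinearMap.comp_apply, hρ, hρ, mul_assoc, he.eq]
  have hρe (x : F) : ρ.rangeRestrict (.single x 1) ∈ cornerPart e (LinearMap.range ρ) := by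
    refine Subtype.ext ?_
    change e • ρ (.single x 1) = ρ (.single x 1)
    rw [hρ, one_mul, Finsupp.smul_single, smul_eq_mul, he.eq]
  refine ⟨.of A (LinearMap.range ρ), Finsupp.linearCombination A id ∘ₗ (LinearMap.range ρ).subtype,
    ⟨projective_range_of_comp_self hρρ, ?_⟩, fun x ↦ ?_⟩
  · refine eq_top_iff.2 fun y _ ↦ ?_
    obtain ⟨s, rfl⟩ := ρ.surjective_rangeRestrict y
    induction s using Finsupp.induction_linear with
    | zero => rw [map_zero]; exact zero_mem _
    | add s t hs ht => rw [map_add]; exact add_mem (hs trivial) (ht trivial)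
    | single x a =>
      rw [← mul_one a, ← smul_eq_mul, ← Finsupp.smul_single, map_smul]
      exact Submodule.smul_mem _ _ (Submodule.subset_span (hρe x))
  · refine ⟨⟨ρ.rangeRestrict (.single x.1 1), hρe x.1⟩, Subtype.ext ?_⟩
    change Finsupp.linearCombination A id (ρ (.single x.1 1)) = x.1
    rw [hρ, one_mul, Finsupp.linearCombination_single]
    exact x.2

/-- Lift to `T` the idempotent of `eT` given by a section of `eT → eF`. -/
lemma IsCornerProjective.exists_end_of_projective (hT : IsCornerProjective e T) {f : T →ₗ[A] F}
    (hf : Function.Surjective (cornerPartMap he f))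
    (hF : Module.Projective he.Corner (cornerPart e F)) :
    ∃ ε : T →ₗ[A] T, f ∘ₗ ε = f ∧ ∀ x ∈ cornerPart e T, f x = 0 → ε x = 0 := by
  obtain ⟨s, hs⟩ := Module.projective_lifting_property (cornerPartMap he f) .id hf
  obtain ⟨ε, hε⟩ := hT.exists_lift he (s ∘ₗ cornerPartMap he f)
  have hεs (x : cornerPart e T) : ε x = s (cornerPartMap he f x) :=
    congrArg Subtype.val (LinearMap.congr_fun hε x)
  refine ⟨ε, hT.hom_ext fun x hx ↦ ?_, fun x hx hfx ↦ ?_⟩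
  · refine (congrArg f (hεs ⟨x, hx⟩)).trans ?_
    exact congrArg Subtype.val (LinearMap.congr_fun hs (cornerPartMap he f ⟨x, hx⟩))
  · have hfx' : cornerPartMap he f ⟨x, hx⟩ = 0 := Subtype.ext hfx
    rw [hεs ⟨x, hx⟩, hfx', map_zero]
    rfl

section Bound

variable {p : ℕ} (hp : ∀ (H : Type u) [AddCommGroup H] [Module A H],
  (∀ x : H, e • x = 0) → ProjDimLE A H p)
include hp

lemma ProjDimLE.of_ker_of_cornerPartMap_surjective {f : T →ₗ[A] F} {m : ℕ} (hpm : p ≤ m)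
    (hT : Module.Projective A T) (hf : Function.Surjective (cornerPartMap he f))
    (hK : ProjDimLE A (LinearMap.ker f) m) : ProjDimLE A F (m + 1) := by
  have hrange : ProjDimLE A (LinearMap.range f) (m + 1) :=
    .of_ker f.surjective_rangeRestrict (.of_projective hT _) (by rwa [LinearMap.ker_rangeRestrict])
  have hcoker (x : F ⧸ LinearMap.range f) : e • x = 0 := by
    obtain ⟨y, rfl⟩ := Submodule.mkQ_surjective _ x
    obtain ⟨t, ht⟩ := hf ⟨e • y, smul_mem_cornerPart he y⟩
    rw [← map_smul, Submodule.mkQ_apply, Submodule.Quotient.mk_eq_zero]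
    exact ⟨t, congrArg Subtype.val ht⟩
  exact .middle Subtype.val_injective (Submodule.mkQ_surjective _)
    (LinearMap.exact_subtype_mkQ _) hrange ((hp _ hcoker).mono (by lia))

lemma ProjDimLE.of_projective_cornerPart (hF : Module.Projective he.Corner (cornerPart e F)) :
    ProjDimLE A F (p + 1) := by
  obtain ⟨T, f, hT, hf⟩ := exists_cornerProjective_cover he F
  obtain ⟨ε, hfε, hε⟩ := hT.exists_end_of_projective he hf hF
  have hεε : ε ∘ₗ ε = ε := hT.hom_ext fun x hx ↦ by
    have hεx : ε x ∈ cornerPart e T := (map_smul ε e x).symm.trans (congrArg ε hx)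
    refine sub_eq_zero.1 ((map_sub ε _ _).symm.trans (hε _ (sub_mem hεx hx) ?_))
    rw [map_sub, sub_eq_zero]
    exact LinearMap.congr_fun hfε x
  have := hT.projective
  refine .of_ker_of_cornerPartMap_surjective he hp le_rfl (f := f ∘ₗ (LinearMap.range ε).subtype)
    (projective_range_of_comp_self hεε) (fun y ↦ ?_) (hp _ fun x ↦ ?_)
  · obtain ⟨t, rfl⟩ := hf y
    refine ⟨cornerPartMap he ε.rangeRestrict t, Subtype.ext ?_⟩
    exact LinearMap.congr_fun hfε t
  · have hx : e • (x.1 : T) = ε (e • x.1) :=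
      (congrArg (e • ·.1) (rangeRestrict_apply_of_comp_self hεε x.1).symm).trans
        (map_smul ε _ _).symm
    have hfx : f (e • x.1) = 0 := by
      rw [map_smul]
      exact (congrArg _ x.2).trans (smul_zero e)
    exact Subtype.ext (Subtype.ext (hx.trans (hε _ (smul_mem_cornerPart he _) hfx)))

lemma ProjDimLE.of_cornerPart {k : ℕ} (hF : ProjDimLE he.Corner (cornerPart e F) k) :
    ProjDimLE A F (p + 1 + k) := by
  induction k generalizing F with
  | zero => exact .of_projective_cornerPart he hp (projDimLE_zero_iff.1 hF)
  | succ k ih =>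
    obtain ⟨T, f, hT, hf⟩ := exists_cornerProjective_cover he F
    refine .of_ker_of_cornerPartMap_surjective he hp (by lia) hT.projective hf (ih ?_)
    exact .left (cornerPartMap_injective he Subtype.val_injective) hf
      (exact_cornerPartMap he Subtype.val_injective f.exact_subtype_ker_map)
      (.of_projective (hT.projective_cornerPart he) _) hF

end Bound

/-- A partial resolution `T_{m-1} → ⋯ → T₀ → K → 0` with all `T_j` in `Add (Ae)`. -/
def HasCornerResolution (e : A) : ℕ → ModuleCat.{u} A → Prop
  | 0, _ => True
  | m + 1, K => ∃ (T L : ModuleCat.{u} A) (i : L →ₗ[A] T) (f : T →ₗ[A] K),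
      IsCornerProjective e T ∧ Function.Injective i ∧ Function.Surjective f ∧
        Function.Exact i f ∧ HasCornerResolution e m L

lemma HasCornerResolution.of_subsingleton (m : ℕ) (K : ModuleCat.{u} A) [Subsingleton K] :
    HasCornerResolution e m K := by
  induction m with
  | zero => trivial
  | succ m ih =>
    have hK : Module.Projective A K := .of_free
    exact ⟨K, K, .id, .id, ⟨hK, Subsingleton.elim _ _⟩, fun _ _ h ↦ h,
      fun x ↦ ⟨x, rfl⟩, fun x ↦ ⟨fun _ ↦ ⟨x, rfl⟩, fun _ ↦ Subsingleton.elim _ _⟩, ih⟩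

lemma HasCornerResolution.hom_ext {m : ℕ} {K : ModuleCat.{u} A}
    (hK : HasCornerResolution e (m + 1) K) {g h : K →ₗ[A] F}
    (hgh : ∀ x ∈ cornerPart e K, g x = h x) : g = h := by
  obtain ⟨T, L, i, f, hT, -, hf, -⟩ := hK
  refine LinearMap.cancel_right hf |>.1 (hT.hom_ext fun x hx ↦ hgh (f x) ?_)
  exact (map_smul f e x).symm.trans (congrArg f hx)

lemma HasCornerResolution.projective {m : ℕ} {K : ModuleCat.{u} A}
    (hK : HasCornerResolution e (m + 2) K)
    (hF : Module.Projective he.Corner (cornerPart e K)) : Module.Projective A K := by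
  obtain ⟨T, L, i, f, hT, -, hf, hif, hL⟩ := hK
  obtain ⟨ε, hfε, hε⟩ := hT.exists_end_of_projective he (cornerPartMap_surjective he hf) hF
  have hεi : ε ∘ₗ i = 0 := hL.hom_ext fun x hx ↦
    hε _ ((map_smul i e x).symm.trans (congrArg i hx)) (hif.apply_apply_eq_zero x)
  have hker := LinearMap.range_le_ker_iff.2 hεi
  let s : K →ₗ[A] T := (LinearMap.range i).liftQ ε hker ∘ₗ
    (hif.linearEquivOfSurjective hf).symm.toLinearMap
  have hs (x : T) : s (f x) = ε x :=
    congrArg ((LinearMap.range i).liftQ ε hker) (hif.linearEquivOfSurjective_symm_apply hf x)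
  have := hT.projective
  refine .of_split s f (LinearMap.cancel_right hf |>.1 (LinearMap.ext fun x ↦ ?_))
  exact (congrArg f (hs x)).trans (LinearMap.congr_fun hfε x)

lemma HasCornerResolution.projDimLE {n : ℕ} {K : ModuleCat.{u} A}
    (hK : HasCornerResolution e (n + 2) K) (hF : ProjDimLE he.Corner (cornerPart e K) n) :
    ProjDimLE A K n := by
  induction n generalizing K with
  | zero => exact projDimLE_zero_iff.2 (hK.projective he (projDimLE_zero_iff.1 hF))
  | succ n ih =>
    obtain ⟨T, L, i, f, hT, hi, hf, hif, hL⟩ := hK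
    refine .right hi hf hif (ih hL ?_) (.of_projective hT.projective _)
    exact .left (cornerPartMap_injective he hi) (cornerPartMap_surjective he hf)
      (exact_cornerPartMap he hi hif) (.of_projective (hT.projective_cornerPart he) _) hF

section Quotient

variable {N C : Type u} [AddCommGroup N] [Module A N] [AddCommGroup C] [Module A C]
  {q : N →ₗ[A] C} {j : N →ₗ[A] T} {a : ℕ}

lemma ProjDimLE.of_hasCornerResolution_ker (hN : Module.Projective A N)
    (hT : IsCornerProjective e T) (hj : Function.Injective j) (hq : Function.Surjective q)
    (hK : ∀ m, HasCornerResolution e m (.of A (LinearMap.ker q))) (ha : gldimLE he.Corner a) :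
    ProjDimLE A C a := by
  let κ : LinearMap.ker q →ₗ[A] T := j ∘ₗ (LinearMap.ker q).subtype
  have hκ : Function.Injective (cornerPartMap he κ) :=
    cornerPartMap_injective he (hj.comp Subtype.val_injective)
  let π := (LinearMap.range (cornerPartMap he κ)).mkQ
  have hκπ : Function.Exact (cornerPartMap he κ) π := LinearMap.exact_map_mkQ_range _
  have hπ : Function.Surjective π := Submodule.mkQ_surjective _
  cases a with
  | zero =>
    obtain ⟨r, hr⟩ := (hκπ.split_tfae hκ hπ).out 0 1 |>.1 <|
      have := projDimLE_zero_iff.1 (ha.projDimLE (_ ⧸ LinearMap.range (cornerPartMap he κ)))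
      Module.projective_lifting_property π .id hπ
    obtain ⟨ρ, hρ⟩ := hT.exists_lift he r
    have hρκ : ρ ∘ₗ κ = .id := (hK 1).hom_ext fun x hx ↦
      congrArg Subtype.val <| (LinearMap.congr_fun hρ (cornerPartMap he κ ⟨x, hx⟩)).trans
        (LinearMap.congr_fun hr ⟨x, hx⟩)
    have hsplit : ∃ l, l ∘ₗ (LinearMap.ker q).subtype = .id := ⟨ρ ∘ₗ j, hρκ⟩
    obtain ⟨s, hs⟩ :=
      (q.exact_subtype_ker_map.split_tfae Subtype.val_injective hq).out 0 1 |>.2 hsplit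
    exact projDimLE_zero_iff.2 (.of_split s q hs)
  | succ a =>
    have hK' : ProjDimLE he.Corner (cornerPart e (LinearMap.ker q)) a :=
      .left hκ hπ hκπ (.of_projective (hT.projective_cornerPart he) a) (ha.projDimLE _)
    exact .of_ker hq (.of_projective hN _) ((hK _).projDimLE he hK')

end Quotient

lemma smul_eq_zero_of_mem_span_singleton {H : Type u} [AddCommGroup H] [Module A H]
    (hH : ∀ x : H, e • x = 0) {a : A} (ha : a ∈ TwoSidedIdeal.span {e}) (x : H) : a • x = 0 := by
  have h : TwoSidedIdeal.span {e} ≤ TwoSidedIdeal.ker (Module.toAddMonoidEnd A H) :=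
    TwoSidedIdeal.span_le.2 <| Set.singleton_subset_iff.2 <|
      (TwoSidedIdeal.mem_ker _).2 <| AddMonoidHom.ext hH
  exact DFunLike.congr_fun ((TwoSidedIdeal.mem_ker _).1 (h ha)) x

theorem gldimLE_of_corner_of_quotient {C : Type u} [Ring C] [Module A C] [IsScalarTower A C C]
    {Ψ : A →+* C} (hΨ : Function.Surjective Ψ) (hAC : ∀ (a : A) (x : C), a • x = Ψ a * x)
    (hker : ∀ a, Ψ a = 0 → a ∈ TwoSidedIdeal.span {e}) {a b q : ℕ}
    (hC : ProjDimLE A C q) (hb : gldimLE C b) (ha : gldimLE he.Corner a) :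
    gldimLE A (b + q + 1 + a) := by
  refine fun F ↦ pdLE_iff_projDimLE.2 (.of_cornerPart he (fun H _ _ hH ↦ ?_) (ha.projDimLE _))
  have hzero (x : A) (hx : x ∈ RingHom.ker Ψ) : Module.toAddMonoidEnd A H x = 0 :=
    AddMonoidHom.ext (smul_eq_zero_of_mem_span_singleton hH (hker x hx))
  let g := RingHom.liftOfSurjective Ψ hΨ ⟨_, hzero⟩
  let : Module C H := Module.compHom H g
  have hsmul (x : A) (h : H) : Ψ x • h = x • h :=
    DFunLike.congr_fun (Ψ.liftOfSurjective_comp_apply hΨ ⟨_, hzero⟩ x) h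
  have : IsScalarTower A C H := ⟨fun x c h ↦ by rw [hAC, mul_smul, hsmul]⟩
  exact .restrictScalars hC (hb.projDimLE H)

end Recollement

section AddCategory

variable {R : Type u} [CommRing R]

/-- The linear maps factoring through a finite direct sum of copies of `M`, equivalently through
an object of `add M`. -/
def FactorsThroughAdd (M : Type u) [AddCommGroup M] [Module R M] {N L : Type u}
    [AddCommGroup N] [Module R N] [AddCommGroup L] [Module R L] (f : N →ₗ[R] L) : Prop :=
  ∃ (k : ℕ) (i : N →ₗ[R] Fin k → M) (p : (Fin k → M) →ₗ[R] L), p ∘ₗ i = f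

namespace FactorsThroughAdd

variable {M N L K : Type u} [AddCommGroup M] [Module R M] [AddCommGroup N] [Module R N]
  [AddCommGroup L] [Module R L] [AddCommGroup K] [Module R K]

lemma comp_left {f : N →ₗ[R] L} (hf : FactorsThroughAdd M f) (g : L →ₗ[R] K) :
    FactorsThroughAdd M (g ∘ₗ f) := by
  obtain ⟨k, i, p, rfl⟩ := hf
  exact ⟨k, i, g ∘ₗ p, rfl⟩

lemma comp_right {f : L →ₗ[R] K} (hf : FactorsThroughAdd M f) (g : N →ₗ[R] L) :
    FactorsThroughAdd M (f ∘ₗ g) := by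
  obtain ⟨k, i, p, rfl⟩ := hf
  exact ⟨k, i ∘ₗ g, p, rfl⟩

lemma mono {M' : ModuleCat.{u} R} (hM : MemAdd R M' (.of R M)) {f : N →ₗ[R] L}
    (hf : FactorsThroughAdd M f) : FactorsThroughAdd M' f := by
  obtain ⟨l, j, q, hjq⟩ := hM
  obtain ⟨k, i, p, rfl⟩ := hf
  let ε := (LinearEquiv.curry R M' (Fin k) (Fin l)).symm.trans
    (LinearEquiv.funCongrLeft R M' finProdFinEquiv.symm)
  refine ⟨k * l, ε.toLinearMap ∘ₗ j.compLeft (Fin k) ∘ₗ i,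
    p ∘ₗ q.compLeft (Fin k) ∘ₗ ε.symm.toLinearMap, LinearMap.ext fun x ↦ congrArg p ?_⟩
  change q.compLeft (Fin k) (ε.symm (ε (j.compLeft (Fin k) (i x)))) = i x
  rw [LinearEquiv.symm_apply_apply]
  exact funext fun t ↦ LinearMap.congr_fun hjq (i x t)

lemma exists_sum {f : N →ₗ[R] L} (hf : FactorsThroughAdd M f) :
    ∃ (k : ℕ) (i : Fin k → N →ₗ[R] M) (p : Fin k → M →ₗ[R] L), ∑ l, p l ∘ₗ i l = f := by
  obtain ⟨k, i, p, rfl⟩ := hf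
  refine ⟨k, fun l ↦ .proj l ∘ₗ i, fun l ↦ p ∘ₗ .single R (fun _ ↦ M) l,
    LinearMap.ext fun x ↦ ?_⟩
  rw [LinearMap.sum_apply]
  exact (map_sum p _ _).symm.trans (congrArg p (LinearMap.sum_single_apply _ (i x)))

end FactorsThroughAdd

namespace MemAdd

variable {M N L : ModuleCat.{u} R}

lemma trans (h : MemAdd R M N) (h' : MemAdd R N L) : MemAdd R M L :=
  FactorsThroughAdd.mono h h'

lemma factorsThroughAdd {A B : Type u} [AddCommGroup A] [Module R A] [AddCommGroup B]
    [Module R B] (h : MemAdd R M N) (s : A →ₗ[R] N) (t : N →ₗ[R] B) :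
    FactorsThroughAdd M (t ∘ₗ s) :=
  (FactorsThroughAdd.comp_left (f := .id) h t).comp_right s

lemma of_projective (P : ModuleCat.{u} R) [Module.Projective R P]
    [Module.Finite R P] : MemAdd R (.of R R) P := by
  obtain ⟨k, p, i, -, -, h⟩ := Module.Finite.exists_comp_eq_id_of_projective R P
  exact ⟨k, i, p, h⟩

lemma prod_left (M N : Type u) [AddCommGroup M] [Module R M] [AddCommGroup N] [Module R N] :
    MemAdd R (.of R (M × N)) (.of R M) :=
  ⟨1, .pi fun _ ↦ .inl R M N, .fst R M N ∘ₗ .proj 0, rfl⟩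

lemma prod_right (M N : Type u) [AddCommGroup M] [Module R M] [AddCommGroup N] [Module R N] :
    MemAdd R (.of R (M × N)) (.of R N) :=
  ⟨1, .pi fun _ ↦ .inr R M N, .snd R M N ∘ₗ .proj 0, rfl⟩

end MemAdd

lemma projective_hom_of_memAdd {V P : ModuleCat.{u} R} (h : MemAdd R V P) :
    Module.Projective (Module.End R V) (P →ₗ[R] V) := by
  obtain ⟨k, i, p, hip⟩ := h
  have : Module.Projective (Module.End R V) ((Fin k → V) →ₗ[R] V) :=
    .of_equiv (LinearMap.lsum R (fun _ : Fin k ↦ V) (Module.End R V))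
  refine .of_split (LinearMap.lcomp _ V p) (LinearMap.lcomp _ V i) (LinearMap.ext fun f ↦ ?_)
  exact (LinearMap.comp_assoc i p f).trans (congrArg (f ∘ₗ ·) hip)

section Prod

variable (R) (M W : Type u) [AddCommGroup M] [Module R M] [AddCommGroup W] [Module R W]

/-- The idempotent of `End_R(M ⊕ W)` projecting onto `M`. -/
def fstIdempotent : Module.End R (M × W) := .inl R M W ∘ₗ .fst R M W

lemma isIdempotentElem_fstIdempotent : IsIdempotentElem (fstIdempotent R M W) := rfl

/-- The corner ring of `End_R(M ⊕ W)` at the projection onto `M` is `End_R(M)`. -/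
def fstIdempotentCornerEquiv :
    (isIdempotentElem_fstIdempotent R M W).Corner ≃+* Module.End R M where
  toFun x := .fst R M W ∘ₗ x.1 ∘ₗ .inl R M W
  invFun f := ⟨.inl R M W ∘ₗ f ∘ₗ .fst R M W, .inl R M W ∘ₗ f ∘ₗ .fst R M W, rfl⟩
  left_inv := by
    rintro ⟨_, x, rfl⟩
    rfl
  right_inv _ := rfl
  map_mul' := by
    rintro ⟨_, x, rfl⟩ ⟨_, y, rfl⟩
    rfl
  map_add' x y := LinearMap.ext fun _ ↦ rfl

variable {R M W}

lemma isCornerProjective_hom {P : ModuleCat.{u} R} (hP : MemAdd R (.of R M) P) :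
    IsCornerProjective (fstIdempotent R M W) (P →ₗ[R] M × W) where
  projective := projective_hom_of_memAdd (V := .of R (M × W)) ((MemAdd.prod_left M W).trans hP)
  span_cornerPart := by
    refine eq_top_iff.2 fun f _ ↦ ?_
    obtain ⟨k, i, p, hip⟩ := (hP.factorsThroughAdd .id f).exists_sum
    rw [← f.comp_id, ← hip]
    refine sum_mem fun l _ ↦ ?_
    have hl : p l ∘ₗ i l = (p l ∘ₗ .fst R M W : Module.End R (M × W)) •
        (LinearMap.inl R M W ∘ₗ i l) := rfl
    rw [hl]
    exact Submodule.smul_mem _ _ (Submodule.subset_span rfl)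

lemma mem_span_fstIdempotent {a : Module.End R (M × W)}
    (ha : FactorsThroughAdd M (a ∘ₗ .inr R M W)) :
    a ∈ TwoSidedIdeal.span {fstIdempotent R M W} := by
  obtain ⟨k, i, p, hip⟩ := ha.exists_sum
  have ha' : a = a * fstIdempotent R M W + ∑ l, (p l ∘ₗ .fst R M W) * fstIdempotent R M W *
      (.inl R M W ∘ₗ i l ∘ₗ .snd R M W) := by
    refine LinearMap.ext fun x ↦ ?_
    have hx : ∑ l, p l (i l x.2) = a (0, x.2) :=
      (LinearMap.sum_apply ..).symm.trans (LinearMap.congr_fun hip x.2)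
    rw [LinearMap.add_apply, LinearMap.sum_apply]
    refine (congrArg a (Prod.fst_add_snd x).symm).trans ((map_add a _ _).trans ?_)
    exact congrArg (a (x.1, 0) + ·) hx.symm
  have he := TwoSidedIdeal.subset_span (Set.mem_singleton (fstIdempotent R M W))
  rw [ha']
  refine add_mem (TwoSidedIdeal.mul_mem_left _ _ _ he) (sum_mem fun l _ ↦ ?_)
  exact TwoSidedIdeal.mul_mem_right _ _ _ (TwoSidedIdeal.mul_mem_left _ _ _ he)

end Prod

end AddCategory

section ExtVanishing

open Abelian

variable {R : Type u} [CommRing R] {X Y : ModuleCat.{u} R}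

lemma extZero.subsingleton {i : ℕ} (h : extZero R i X Y) : Subsingleton (Ext X Y i) := by
  let P := ProjectiveResolution.of X
  have hexact : (P.complex.linearYonedaObj R Y).ExactAt i := by
    rw [HomologicalComplex.exactAt_iff_isZero_homology]
    exact ((ModuleCat.isZero_iff_subsingleton).2 h).of_iso (P.isoExt (R := R) i Y).symm
  refine subsingleton_of_forall_eq 0 fun x ↦ ?_
  obtain ⟨f, hf, rfl⟩ := P.extMk_surjective x (i + 1) rfl
  cases i with
  | zero =>
    rw [HomologicalComplex.exactAt_iff' _ 0 0 1 (by simp) (by simp),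
      ShortComplex.moduleCat_exact_iff] at hexact
    obtain ⟨g, hg⟩ := hexact f hf
    have hf0 : f = 0 := hg.symm.trans <| congrArg (·.hom g) <|
      HomologicalComplex.shape (P.complex.linearYonedaObj R Y) 0 0 (by simp)
    subst hf0
    exact P.extMk_zero 1 rfl
  | succ i =>
    rw [HomologicalComplex.exactAt_iff' _ i (i + 1) (i + 2) (by simp) (by simp),
      ShortComplex.moduleCat_exact_iff] at hexact
    exact (P.extMk_eq_zero_iff f _ rfl hf i rfl).2 (hexact f hf)

lemma FactorsThroughAdd.ext_comp_eq_zero {M N L : ModuleCat.{u} R} {f : N ⟶ L}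
    (hf : FactorsThroughAdd M f.hom) {i : ℕ} (hX : Subsingleton (Ext X M i)) (x : Ext X N i) :
    x.comp (Ext.mk₀ f) (add_zero i) = 0 := by
  obtain ⟨k, s, p, hsp⟩ := hf.exists_sum
  have hf' : f = ∑ l, ModuleCat.ofHom (s l) ≫ ModuleCat.ofHom (p l) := by
    refine ModuleCat.hom_ext ?_
    rw [ModuleCat.hom_sum]
    exact hsp.symm
  rw [hf', Ext.mk₀_sum, Ext.comp_sum]
  refine Finset.sum_eq_zero fun l _ ↦ ?_
  rw [← Ext.mk₀_comp_mk₀, ← Ext.comp_assoc_of_second_deg_zero,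
    Subsingleton.elim (x.comp _ _) 0, Ext.zero_comp]

lemma MemAdd.subsingleton_ext {M N : ModuleCat.{u} R} (h : MemAdd R M N) {i : ℕ}
    (hX : Subsingleton (Ext X M i)) : Subsingleton (Ext X N i) :=
  subsingleton_of_forall_eq 0 fun x ↦
    (Ext.comp_mk₀_id x).symm.trans (FactorsThroughAdd.ext_comp_eq_zero (f := 𝟙 N) h hX x)

lemma subsingleton_ext_of_projective {P : ModuleCat.{u} R} (hP : Projective P)
    [Module.Finite R P] {i : ℕ} (hX : Subsingleton (Ext X (.of R R) i)) :
    Subsingleton (Ext X P i) :=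
  have : Module.Projective R P := (IsProjective.iff_projective P).2 hP
  (MemAdd.of_projective P).subsingleton_ext hX

lemma IsSyzygy.exists_shortExact {n : ℕ} {N : ModuleCat.{u} R} (h : IsSyzygy R (n + 1) Y N) :
    ∃ S : ShortComplex (ModuleCat.{u} R), S.X₁ = Y ∧ S.ShortExact ∧ Projective S.X₂ ∧
      Module.Finite R S.X₂ ∧ IsSyzygy R n S.X₃ N := by
  obtain ⟨P, K, i, p, hP, hPfin, hi, hp, hip, hK⟩ := h
  exact ⟨ModuleCat.shortComplexOfCompEqZero i.hom p.hom hip.linearMap_comp_eq_zero, rfl,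
    ModuleCat.shortComplex_shortExact _ hip hi hp, hP, hPfin, hK⟩

lemma IsSyzygy.finite [IsNoetherianRing R] [Module.Finite R X] {n : ℕ} (h : IsSyzygy R n Y X) :
    Module.Finite R Y := by
  cases n with
  | zero => exact .equiv h.some.toLinearEquiv.symm
  | succ n =>
    obtain ⟨P, K, i, p, -, hP, hi, -⟩ := h
    exact .of_injective i.hom hi

lemma IsSyzygy.subsingleton_ext {n c : ℕ} {N : ModuleCat.{u} R} (h : IsSyzygy R n Y N)
    (hX : ∀ i ≤ c, Subsingleton (Ext X (.of R R) i)) {i : ℕ} (hic : i ≤ c) (hin : i < n) :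
    Subsingleton (Ext X Y i) := by
  induction n generalizing Y i with
  | zero => lia
  | succ n ih =>
    obtain ⟨S, rfl, hS, hP, hPfin, hK⟩ := h.exists_shortExact
    have hXP := subsingleton_ext_of_projective hP (hX i hic)
    refine subsingleton_of_forall_eq 0 fun x ↦ ?_
    have hx : x.comp (Ext.mk₀ S.f) (add_zero i) = 0 := Subsingleton.elim _ _
    cases i with
    | zero =>
      have := hS.mono_f
      exact Ext.postcomp_mk₀_injective_of_mono X S.f (hx.trans (map_zero _).symm)
    | succ i =>
      obtain ⟨y, rfl⟩ := Ext.covariant_sequence_exact₁ X hS x hx rfl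
      have := ih hK (i := i) (by lia) (by lia)
      rw [Subsingleton.elim y 0, Ext.zero_comp]

end ExtVanishing

section SyzygyClass

open Abelian

variable {R : Type u} [CommRing R] {X Y : ModuleCat.{u} R}

section ShortExact

variable {S : ShortComplex (ModuleCat.{u} R)} (hS : S.ShortExact)

lemma precomp_extClass_surjective [Projective S.X₂] (Z : ModuleCat.{u} R) {i j : ℕ}
    (h : 1 + i = j) : Function.Surjective (hS.extClass.precomp Z h) := fun ξ ↦ by
  obtain rfl : i + 1 = j := by lia
  exact Ext.contravariant_sequence_exact₃ hS Z ξ (Ext.eq_zero_of_projective _) h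

lemma precomp_extClass_injective [Projective S.X₂] (Z : ModuleCat.{u} R) {i j : ℕ}
    (h : 1 + (i + 1) = j) : Function.Injective (hS.extClass.precomp Z h) := by
  refine (injective_iff_map_eq_zero _).2 fun ξ hξ ↦ ?_
  obtain ⟨η, rfl⟩ := Ext.contravariant_sequence_exact₁ hS Z ξ h hξ
  rw [Ext.eq_zero_of_projective η, Ext.comp_zero]

lemma exists_extension_of_extClass_comp_eq_zero {Z : ModuleCat.{u} R} {f : S.X₁ ⟶ Z}
    (hf : hS.extClass.comp (Ext.mk₀ f) (add_zero 1) = 0) : ∃ g : S.X₂ ⟶ Z, S.f ≫ g = f := by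
  obtain ⟨ξ, hξ⟩ := Ext.contravariant_sequence_exact₁ hS Z (Ext.mk₀ f) (add_zero 1) hf
  obtain ⟨g, rfl⟩ := (Ext.mk₀_bijective _ _).2 ξ
  exact ⟨g, (Ext.mk₀_bijective _ _).1 ((Ext.mk₀_comp_mk₀ ..).symm.trans hξ)⟩

lemma postcomp_extClass_bijective (T : ModuleCat.{u} R) {n : ℕ}
    (h : Subsingleton (Ext T S.X₂ n)) (h' : Subsingleton (Ext T S.X₂ (n + 1))) :
    Function.Bijective (hS.extClass.postcomp T (rfl : n + 1 = n + 1)) := by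
  refine ⟨(injective_iff_map_eq_zero _).2 fun ξ hξ ↦ ?_, fun ξ ↦ ?_⟩
  · obtain ⟨η, rfl⟩ := Ext.covariant_sequence_exact₃ T hS ξ rfl hξ
    rw [Subsingleton.elim η 0, Ext.zero_comp]
  · exact Ext.covariant_sequence_exact₁ T hS ξ (Subsingleton.elim _ _) rfl

end ShortExact

section Iso

variable (e : X ≅ Y)

lemma precomp_mk₀_bijective (Z : ModuleCat.{u} R) {i j : ℕ} (h : 0 + i = j) :
    Function.Bijective ((Ext.mk₀ e.hom).precomp Z h) := by
  obtain rfl : i = j := by lia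
  refine Function.bijective_iff_has_inverse.2 ⟨(Ext.mk₀ e.inv).precomp Z (zero_add i), ?_, ?_⟩
  · exact fun ξ ↦ (Ext.mk₀_comp_mk₀_assoc ..).trans (by rw [e.inv_hom_id, Ext.mk₀_id_comp])
  · exact fun ξ ↦ (Ext.mk₀_comp_mk₀_assoc ..).trans (by rw [e.hom_inv_id, Ext.mk₀_id_comp])

lemma postcomp_mk₀_bijective (T : ModuleCat.{u} R) (n : ℕ) :
    Function.Bijective ((Ext.mk₀ e.hom).postcomp T (add_zero n)) := by
  refine Function.bijective_iff_has_inverse.2 ⟨(Ext.mk₀ e.inv).postcomp T (add_zero n), ?_, ?_⟩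
  · exact fun ξ ↦ (Ext.comp_assoc_of_second_deg_zero ..).trans
      (by rw [Ext.mk₀_comp_mk₀, e.hom_inv_id, Ext.comp_mk₀_id])
  · exact fun ξ ↦ (Ext.comp_assoc_of_second_deg_zero ..).trans
      (by rw [Ext.mk₀_comp_mk₀, e.inv_hom_id, Ext.comp_mk₀_id])

end Iso

/-- The properties used here of the Yoneda class `θ ∈ Ext^n(X, Y)` of an exact sequence
`0 → Y → P_{n-1} → ⋯ → P₀ → X → 0` with finitely generated projective middle terms. -/
structure IsSyzygyClass {n : ℕ} (θ : Ext X Y n) : Prop where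
  precomp_surjective (Z : ModuleCat.{u} R) {i j : ℕ} (h : n + i = j) :
    Function.Surjective (θ.precomp Z h)
  precomp_injective (Z : ModuleCat.{u} R) {i j : ℕ} (h : n + (i + 1) = j) :
    Function.Injective (θ.precomp Z h)
  factorsThroughAdd_of_comp_eq_zero {Z : ModuleCat.{u} R} (f : Y ⟶ Z) :
    θ.comp (Ext.mk₀ f) (add_zero n) = 0 → FactorsThroughAdd R f.hom
  postcomp_bijective (T : ModuleCat.{u} R) :
    (∀ i ≤ n, Subsingleton (Ext T (.of R R) i)) → Function.Bijective (θ.postcomp T (zero_add n))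

namespace IsSyzygyClass

lemma of_iso (e : X ≅ Y) : IsSyzygyClass (Ext.mk₀ e.hom) where
  precomp_surjective Z _ _ h := (precomp_mk₀_bijective e Z h).2
  precomp_injective Z _ _ h := (precomp_mk₀_bijective e Z h).1
  factorsThroughAdd_of_comp_eq_zero f hf := by
    rw [Ext.mk₀_comp_mk₀, Ext.mk₀_eq_zero_iff] at hf
    obtain rfl : f = 0 := by rw [← e.inv_hom_id_assoc f, hf, Limits.comp_zero]
    exact ⟨0, 0, 0, LinearMap.zero_comp _⟩
  postcomp_bijective T _ := postcomp_mk₀_bijective e T 0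

lemma comp_extClass {S : ShortComplex (ModuleCat.{u} R)} (hS : S.ShortExact) [Projective S.X₂]
    [Module.Finite R S.X₂] {n : ℕ} {θ : Ext X S.X₃ n} (hθ : IsSyzygyClass θ) :
    IsSyzygyClass (θ.comp hS.extClass (rfl : n + 1 = n + 1)) where
  precomp_surjective Z i j h := by
    have hcomp : ⇑((θ.comp hS.extClass rfl).precomp Z h) =
        θ.precomp Z (by lia) ∘ hS.extClass.precomp Z rfl :=
      funext fun ξ ↦ Ext.comp_assoc θ hS.extClass ξ rfl rfl h
    exact hcomp ▸ (hθ.precomp_surjective Z _).comp (precomp_extClass_surjective hS Z rfl)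
  precomp_injective Z i j h := by
    have hcomp : ⇑((θ.comp hS.extClass rfl).precomp Z h) =
        θ.precomp Z (by lia : n + (i + 1 + 1) = j) ∘ hS.extClass.precomp Z (add_comm 1 (i + 1)) :=
      funext fun ξ ↦ Ext.comp_assoc θ hS.extClass ξ rfl (add_comm 1 (i + 1)) h
    exact hcomp ▸ (hθ.precomp_injective Z _).comp (precomp_extClass_injective hS Z _)
  factorsThroughAdd_of_comp_eq_zero {Z} f hf := by
    rw [Ext.comp_assoc_of_third_deg_zero] at hf
    obtain ⟨g, rfl⟩ := exists_extension_of_extClass_comp_eq_zero hS <|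
      hθ.precomp_injective Z (i := 0) rfl (hf.trans (map_zero _).symm)
    have : Module.Projective R S.X₂ := (IsProjective.iff_projective S.X₂).2 inferInstance
    exact (MemAdd.of_projective S.X₂).factorsThroughAdd S.f.hom g.hom
  postcomp_bijective T hT := by
    have hcomp : ⇑((θ.comp hS.extClass rfl).postcomp T (zero_add (n + 1))) =
        hS.extClass.postcomp T rfl ∘ θ.postcomp T (zero_add n) :=
      funext fun ξ ↦ (Ext.comp_assoc ξ θ hS.extClass (zero_add n) rfl (by lia)).symm
    have hP (i : ℕ) (hi : i ≤ n + 1) : Subsingleton (Ext T S.X₂ i) :=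
      subsingleton_ext_of_projective inferInstance (hT i hi)
    exact hcomp ▸ (postcomp_extClass_bijective hS T (hP _ (by lia)) (hP _ le_rfl)).comp
      (hθ.postcomp_bijective T fun i hi ↦ hT i (by lia))

end IsSyzygyClass

lemma IsSyzygy.exists_isSyzygyClass {n : ℕ} (h : IsSyzygy R n Y X) :
    ∃ θ : Ext X Y n, IsSyzygyClass θ := by
  induction n generalizing Y with
  | zero => exact ⟨_, .of_iso h.some.symm⟩
  | succ n ih =>
    obtain ⟨S, rfl, hS, _, _, hK⟩ := h.exists_shortExact
    obtain ⟨θ, hθ⟩ := ih hK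
    exact ⟨_, hθ.comp_extClass hS⟩

end SyzygyClass

section ExtEndomorphisms

open Abelian

variable {R : Type u} [CommRing R] {X V : ModuleCat.{u} R} {n : ℕ} {α : Ext X V n}
  (hα : Function.Bijective (α.postcomp X (zero_add n)))

/-- If `α ∈ Ext^n(X, V)` freely generates `Ext^n(X, V)` over `End_R(X)`, the resulting
identification of the two. -/
def endEquivExt : Module.End R X ≃+ Ext X V n :=
  (ModuleCat.homAddEquiv.symm.trans Ext.addEquiv₀.symm).trans (.ofBijective _ hα)

lemma endEquivExt_mul (x y : Module.End R X) :
    endEquivExt hα (x * y) =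
      (Ext.mk₀ (ModuleCat.ofHom y)).comp (endEquivExt hα x) (zero_add n) :=
  (Ext.mk₀_comp_mk₀_assoc ..).symm

lemma endEquivExt_symm_comp_mk₀ (ξ : Ext X V n) (a : V ⟶ V) :
    (endEquivExt hα).symm (ξ.comp (Ext.mk₀ a) (add_zero n)) =
      (endEquivExt hα).symm (α.comp (Ext.mk₀ a) (add_zero n)) * (endEquivExt hα).symm ξ := by
  obtain ⟨x, rfl⟩ := (endEquivExt hα).surjective ξ
  rw [AddEquiv.symm_apply_eq, endEquivExt_mul, AddEquiv.apply_symm_apply,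
    AddEquiv.symm_apply_apply]
  exact Ext.comp_assoc_of_third_deg_zero ..

/-- The action of `End_R(V)` on `Ext^n(X, V)`, transported to `End_R(X)` along `endEquivExt`. -/
def endRingHom : Module.End R V →+* Module.End R X where
  toFun a := (endEquivExt hα).symm (α.comp (Ext.mk₀ (ModuleCat.ofHom a)) (add_zero n))
  map_one' := by
    rw [AddEquiv.symm_apply_eq]
    exact (Ext.comp_mk₀_id α).trans (Ext.mk₀_id_comp α).symm
  map_mul' a b := by
    rw [← endEquivExt_symm_comp_mk₀, Ext.comp_assoc_of_third_deg_zero, Ext.mk₀_comp_mk₀]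
    rfl
  map_zero' := by rw [ModuleCat.ofHom_zero, Ext.mk₀_zero, Ext.comp_zero, map_zero]
  map_add' a b := by rw [ModuleCat.ofHom_add, Ext.mk₀_add, Ext.comp_add, map_add]

variable [Module (Module.End R V) (Module.End R X)]
  (hVX : ∀ (a : Module.End R V) (x : Module.End R X), a • x = endRingHom hα a * x)

/-- Composition with `θ ∈ Ext^n(X, Y)`, as a map to `End_R(X)` along `endEquivExt`. -/
def homToEnd {Y : ModuleCat.{u} R} (θ : Ext X Y n) :
    (Y →ₗ[R] V) →ₗ[Module.End R V] Module.End R X where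
  toFun f := (endEquivExt hα).symm (θ.comp (Ext.mk₀ (ModuleCat.ofHom f)) (add_zero n))
  map_add' f g := by rw [ModuleCat.ofHom_add, Ext.mk₀_add, Ext.comp_add, map_add]
  map_smul' a f := by
    refine Eq.trans ?_ ((endEquivExt_symm_comp_mk₀ ..).trans (hVX _ _).symm)
    rw [Ext.comp_assoc_of_third_deg_zero, Ext.mk₀_comp_mk₀]
    rfl

variable {Y : ModuleCat.{u} R} {θ : Ext X Y n}

lemma homToEnd_surjective (hθ : Function.Surjective (θ.precomp V (add_zero n))) :
    Function.Surjective (homToEnd hα hVX θ) := fun x ↦ by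
  obtain ⟨ξ, hξ⟩ := hθ (endEquivExt hα x)
  obtain ⟨f, rfl⟩ := (Ext.mk₀_bijective _ _).2 ξ
  exact ⟨f.hom, (AddEquiv.symm_apply_eq _).2 hξ⟩

lemma homToEnd_eq_zero_iff (f : Y →ₗ[R] V) :
    homToEnd hα hVX θ f = 0 ↔ θ.comp (Ext.mk₀ (ModuleCat.ofHom f)) (add_zero n) = 0 :=
  (endEquivExt hα).symm.map_eq_zero_iff

end ExtEndomorphisms

section Resolution

open Abelian

variable {R : Type u} [CommRing R] {X Y M W : ModuleCat.{u} R}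

lemma exists_extension_of_factorsThroughAdd {S : ShortComplex (ModuleCat.{u} R)}
    (hS : S.ShortExact) (h : Subsingleton (Ext S.X₃ M 1)) {Z : ModuleCat.{u} R} {f : S.X₁ ⟶ Z}
    (hf : FactorsThroughAdd M f.hom) : ∃ g : S.X₂ ⟶ Z, S.f ≫ g = f :=
  exists_extension_of_extClass_comp_eq_zero hS (hf.ext_comp_eq_zero h _)

lemma IsSyzygyClass.comp_eq_zero_iff {n : ℕ} {θ : Ext X Y n} (hθ : IsSyzygyClass θ)
    (hgen : MemAdd R M (.of R R)) (hXM : Subsingleton (Ext X M n)) {Z : ModuleCat.{u} R}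
    (f : Y ⟶ Z) : θ.comp (Ext.mk₀ f) (add_zero n) = 0 ↔ FactorsThroughAdd M f.hom :=
  ⟨fun h ↦ (hθ.factorsThroughAdd_of_comp_eq_zero f h).mono hgen, fun h ↦ h.ext_comp_eq_zero hXM θ⟩

lemma ext_comp_fst_add_comp_snd {n : ℕ} (ξ : Ext X (ModuleCat.of R (M × W)) n) :
    (ξ.comp (Ext.mk₀ (ModuleCat.ofHom (.fst R M W))) (add_zero n)).comp
        (Ext.mk₀ (ModuleCat.ofHom (.inl R M W))) (add_zero n) +
      (ξ.comp (Ext.mk₀ (ModuleCat.ofHom (.snd R M W))) (add_zero n)).comp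
        (Ext.mk₀ (ModuleCat.ofHom (.inr R M W))) (add_zero n) = ξ := by
  have hid : ModuleCat.ofHom (.fst R M W) ≫ ModuleCat.ofHom (.inl R M W) +
      ModuleCat.ofHom (.snd R M W) ≫ ModuleCat.ofHom (.inr R M W) =
        𝟙 (ModuleCat.of R (M × W)) :=
    ModuleCat.hom_ext (LinearMap.ext fun x ↦ Prod.fst_add_snd x)
  rw [Ext.comp_assoc_of_second_deg_zero, Ext.comp_assoc_of_second_deg_zero, Ext.mk₀_comp_mk₀,
    Ext.mk₀_comp_mk₀, ← Ext.comp_add, ← Ext.mk₀_add, hid, Ext.comp_mk₀_id]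

lemma subsingleton_ext_prod {n : ℕ} (hM : Subsingleton (Ext X M n))
    (hW : Subsingleton (Ext X W n)) : Subsingleton (Ext X (ModuleCat.of R (M × W)) n) := by
  refine subsingleton_of_forall_eq 0 fun ξ ↦ (ext_comp_fst_add_comp_snd ξ).symm.trans ?_
  rw [Subsingleton.elim (ξ.comp _ _ : Ext X M n) 0, Subsingleton.elim (ξ.comp _ _ : Ext X W n) 0,
    Ext.zero_comp, Ext.zero_comp, add_zero]

lemma postcomp_inr_bijective {n : ℕ} (hM : Subsingleton (Ext X M n)) :
    Function.Bijective ((Ext.mk₀ (ModuleCat.ofHom (.inr R M W) :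
      W ⟶ ModuleCat.of R (M × W))).postcomp X (add_zero n)) := by
  refine Function.bijective_iff_has_inverse.2 ⟨(Ext.mk₀ (ModuleCat.ofHom (.snd R M W) :
    ModuleCat.of R (M × W) ⟶ W)).postcomp X (add_zero n), fun ξ ↦ ?_, fun ξ ↦ ?_⟩
  · refine (Ext.comp_assoc_of_second_deg_zero _ _ _ (add_zero n)).trans ?_
    rw [Ext.mk₀_comp_mk₀]
    exact Ext.comp_mk₀_id ξ
  · refine Eq.trans ?_ (ext_comp_fst_add_comp_snd ξ)
    rw [Subsingleton.elim (ξ.comp _ _ : Ext X M n) 0, Ext.zero_comp, zero_add]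
    rfl

lemma IsSyzygyClass.subsingleton_ext_one {n : ℕ} {θ : Ext X Y n} (hθ : IsSyzygyClass θ)
    (hX : Subsingleton (Ext X M (n + 1))) : Subsingleton (Ext Y M 1) :=
  have := hX
  (hθ.precomp_injective M rfl).subsingleton

lemma eq_zero_of_iso_of_factorsThroughAdd (e : X ≅ Y) (hXM : Subsingleton (Ext X M 0))
    {Z : ModuleCat.{u} R} {f : Y ⟶ Z} (hf : FactorsThroughAdd M f.hom) : f = 0 := by
  have h := hf.ext_comp_eq_zero hXM (Ext.mk₀ e.hom)
  rw [Ext.mk₀_comp_mk₀, Ext.mk₀_eq_zero_iff] at h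
  rw [← e.inv_hom_id_assoc f, h, Limits.comp_zero]

lemma HasCornerResolution.succ {S : ShortComplex (ModuleCat.{u} R)} (hS : S.ShortExact)
    (hP : MemAdd R M S.X₂) (hSM : Subsingleton (Ext S.X₃ M 1))
    {K : ModuleCat.{u} (Module.End R (M × W))}
    (ι : K →ₗ[Module.End R (M × W)] (S.X₁ →ₗ[R] M × W)) (hι : Function.Injective ι)
    (hK : ∀ f, f ∈ LinearMap.range ι ↔ FactorsThroughAdd M f) {m : ℕ}
    (h : HasCornerResolution (fstIdempotent R M W) m (.of _ (S.X₃ →ₗ[R] M × W))) :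
    HasCornerResolution (fstIdempotent R M W) (m + 1) K := by
  let res : (S.X₂ →ₗ[R] M × W) →ₗ[Module.End R (M × W)] LinearMap.range ι :=
    (LinearMap.lcomp _ (M × W) S.f.hom).codRestrict _ fun g ↦
      (hK _).2 (hP.factorsThroughAdd S.f.hom g)
  have hres : Function.Surjective res := fun f ↦ by
    obtain ⟨g, hg⟩ := exists_extension_of_factorsThroughAdd (Z := .of R (M × W))
      (f := ModuleCat.ofHom f.1) hS hSM ((hK _).1 f.2)
    exact ⟨g.hom, Subtype.ext (congrArg (·.hom) hg)⟩
  let ε := (LinearEquiv.ofInjective ι hι).symm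
  refine ⟨.of _ (S.X₂ →ₗ[R] M × W), .of _ (S.X₃ →ₗ[R] M × W), LinearMap.lcomp _ (M × W) S.g.hom,
    ε.toLinearMap ∘ₗ res, isCornerProjective_hom hP,
    LinearMap.lcomp_injective_of_surjective _ hS.moduleCat_surjective_g,
    ε.surjective.comp hres, fun g ↦ ?_, h⟩
  have hexact : Function.Exact (LinearMap.lcomp R (M × W) S.g.hom)
      (LinearMap.lcomp R (M × W) S.f.hom) :=
    LinearMap.exact_lcomp_of_exact_of_surjective _
      ((ShortComplex.ShortExact.moduleCat_exact_iff_function_exact S).1 hS.exact)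
      hS.moduleCat_surjective_g
  exact (ε.map_eq_zero_iff.trans Subtype.ext_iff).trans (hexact g)

lemma IsSyzygy.hasCornerResolution {n : ℕ} (hY : IsSyzygy R n Y X) (hgen : MemAdd R M (.of R R))
    (hXM : ∀ i ≤ n, Subsingleton (Ext X M i)) (hXW : ∀ i < n, Subsingleton (Ext X W i))
    {K : ModuleCat.{u} (Module.End R (M × W))}
    (ι : K →ₗ[Module.End R (M × W)] (Y →ₗ[R] M × W)) (hι : Function.Injective ι)
    (hK : ∀ f, f ∈ LinearMap.range ι ↔ FactorsThroughAdd M f) (m : ℕ) :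
    HasCornerResolution (fstIdempotent R M W) m K := by
  induction n generalizing Y K m with
  | zero =>
    have hzero (x : K) : ι x = 0 := congrArg (·.hom) <| eq_zero_of_iso_of_factorsThroughAdd
      (Z := .of R (M × W)) (f := ModuleCat.ofHom (ι x)) hY.some.symm (hXM 0 le_rfl)
      ((hK _).1 ⟨x, rfl⟩)
    have : Subsingleton K := ⟨fun x y ↦ hι ((hzero x).trans (hzero y).symm)⟩
    exact .of_subsingleton m K
  | succ n ih =>
    cases m with
    | zero => trivial
    | succ m =>
      obtain ⟨S, rfl, hS, hP, hPfin, hS₃⟩ := hY.exists_shortExact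
      obtain ⟨θ, hθ⟩ := hS₃.exists_isSyzygyClass
      have : Module.Projective R S.X₂ := (IsProjective.iff_projective S.X₂).2 hP
      refine .succ hS (hgen.trans (.of_projective S.X₂))
        (hθ.subsingleton_ext_one (hXM (n + 1) le_rfl)) ι hι hK ?_
      have hXV : Subsingleton (Ext X (ModuleCat.of R (M × W)) n) :=
        subsingleton_ext_prod (hXM n (by lia)) (hXW n (by lia))
      refine ih hS₃ (fun i hi ↦ hXM i (by lia)) (fun i hi ↦ hXW i (by lia)) .id
        Function.injective_id (fun f ↦ iff_of_true ⟨f, rfl⟩ ?_) m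
      exact (hθ.comp_eq_zero_iff hgen (hXM n (by lia)) (ModuleCat.ofHom f)).1
        (Subsingleton.elim _ _)

end Resolution

section Reduction

open Abelian

variable {R : Type u} [CommRing R] {X M W : ModuleCat.{u} R} {n : ℕ} {θ : Ext X W n}

/-- The image of `θ ∈ Ext^n(X, W)` in `Ext^n(X, M ⊕ W)`. -/
def extInr (M : ModuleCat.{u} R) (θ : Ext X W n) : Ext X (ModuleCat.of R (M × W)) n :=
  θ.comp (Ext.mk₀ (ModuleCat.ofHom (.inr R M W))) (add_zero n)

lemma extInr_comp_mk₀ (a : Module.End R (M × W)) :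
    (extInr M θ).comp (Ext.mk₀ (ModuleCat.ofHom a)) (add_zero n) =
      θ.comp (Ext.mk₀ (ModuleCat.ofHom (a ∘ₗ .inr R M W))) (add_zero n) :=
  (Ext.comp_assoc_of_third_deg_zero ..).trans (congrArg (θ.comp · _) (Ext.mk₀_comp_mk₀ ..))

namespace IsSyzygyClass

lemma postcomp_extInr_bijective (hθ : IsSyzygyClass θ) (hgen : MemAdd R M (.of R R))
    (hXM : ∀ i ≤ n, Subsingleton (Ext X M i)) :
    Function.Bijective ((extInr M θ).postcomp X (zero_add n)) := by
  have hcomp : ⇑((extInr M θ).postcomp X (zero_add n)) =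
      (Ext.mk₀ (ModuleCat.ofHom (.inr R M W) : W ⟶ ModuleCat.of R (M × W))).postcomp X
        (add_zero n) ∘ θ.postcomp X (zero_add n) :=
    funext fun ξ ↦ (Ext.comp_assoc_of_third_deg_zero _ _ _ (zero_add n)).symm
  exact hcomp ▸ (postcomp_inr_bijective (hXM n le_rfl)).comp
    (hθ.postcomp_bijective X fun i hi ↦ hgen.subsingleton_ext (hXM i hi))

variable (hα : Function.Bijective ((extInr M θ).postcomp X (zero_add n)))

lemma endRingHom_surjective (hθ : IsSyzygyClass θ) : Function.Surjective (endRingHom hα) := by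
  intro x
  obtain ⟨ξ, hξ⟩ := hθ.precomp_surjective _ (add_zero n) (endEquivExt hα x)
  obtain ⟨f, rfl⟩ := (Ext.mk₀_bijective _ _).2 ξ
  refine ⟨f.hom ∘ₗ .snd R M W, (AddEquiv.symm_apply_eq _).2 ?_⟩
  exact (extInr_comp_mk₀ _).trans hξ

lemma mem_span_of_endRingHom_eq_zero (hθ : IsSyzygyClass θ) (hgen : MemAdd R M (.of R R))
    (hXM : Subsingleton (Ext X M n)) {a : Module.End R (M × W)} (ha : endRingHom hα a = 0) :
    a ∈ TwoSidedIdeal.span {fstIdempotent R M W} := by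
  have h := (endEquivExt hα).symm.map_eq_zero_iff.1 ha
  exact mem_span_fstIdempotent <|
    (hθ.comp_eq_zero_iff hgen hXM _).1 ((extInr_comp_mk₀ a).symm.trans h)

end IsSyzygyClass

lemma projDimLE_end [Module.Finite R W] (hW : IsSyzygy R n W X) (hgen : MemAdd R M (.of R R))
    (hXM : ∀ i ≤ n, Subsingleton (Ext X M i)) (hθ : IsSyzygyClass θ)
    (hα : Function.Bijective ((extInr M θ).postcomp X (zero_add n)))
    [Module (Module.End R (M × W)) (Module.End R X)]
    (hVX : ∀ (a : Module.End R (M × W)) (x : Module.End R X), a • x = endRingHom hα a * x)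
    {a : ℕ} (ha : gldimLE (Module.End R M) a) :
    ProjDimLE (Module.End R (M × W)) (Module.End R X) a := by
  obtain ⟨k, s, hs⟩ := Module.Finite.exists_fin' R W
  have hfree : MemAdd R M (.of R (Fin k → R)) := hgen.trans (.of_projective _)
  have hXW (i : ℕ) (hi : i < n) : Subsingleton (Ext X W i) :=
    hW.subsingleton_ext (fun j hj ↦ hgen.subsingleton_ext (hXM j hj)) hi.le hi
  refine .of_hasCornerResolution_ker (isIdempotentElem_fstIdempotent R M W)
    (projective_hom_of_memAdd (.prod_right M W)) (isCornerProjective_hom hfree)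
    (LinearMap.lcomp_injective_of_surjective s hs)
    (homToEnd_surjective hα hVX (hθ.precomp_surjective _ _)) (fun m ↦ ?_)
    (.of_ringEquiv (fstIdempotentCornerEquiv R M W) ha)
  refine hW.hasCornerResolution hgen hXM hXW (Submodule.subtype _) Subtype.val_injective
    (fun f ↦ ?_) m
  rw [Submodule.range_subtype, LinearMap.mem_ker, homToEnd_eq_zero_iff]
  exact hθ.comp_eq_zero_iff hgen (hXM n le_rfl) (ModuleCat.ofHom f)

end Reduction

theorem stmt8_general (R : Type u) [CommRing R] (c : ℕ) (M X : ModuleCat.{u} R)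
    (hgen : MemAdd R M (ModuleCat.of R R)) (hXM : ∀ i ≤ c, Subsingleton (Abelian.Ext X M i))
    (W : ModuleCat.{u} R) [Module.Finite R W] (hW : IsSyzygy R c W X)
    (a b : ℕ) (ha : gldimLE (Module.End R M) a) (hb : gldimLE (Module.End R X) b) :
    gldimLE (Module.End R (M × W)) (2 * a + b + 1) := by
  obtain ⟨θ, hθ⟩ := hW.exists_isSyzygyClass
  have hα := hθ.postcomp_extInr_bijective hgen hXM
  let : Module (Module.End R (M × W)) (Module.End R X) := Module.compHom _ (endRingHom hα)
  have : IsScalarTower (Module.End R (M × W)) (Module.End R X) (Module.End R X) :=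
    ⟨fun _ _ _ ↦ mul_assoc ..⟩
  have hpd : ProjDimLE (Module.End R (M × W)) (Module.End R X) a :=
    projDimLE_end hW hgen hXM hθ hα (fun _ _ ↦ rfl) ha
  have hcorner : gldimLE (isIdempotentElem_fstIdempotent R M W).Corner a :=
    .of_ringEquiv (fstIdempotentCornerEquiv R M W) ha
  have h := gldimLE_of_corner_of_quotient _ (hθ.endRingHom_surjective hα) (fun _ _ ↦ rfl)
    (fun _ ↦ hθ.mem_span_of_endRingHom_eq_zero hα hgen (hXM c le_rfl)) hpd hb hcorner
  rwa [show b + a + 1 + a = 2 * a + b + 1 by lia] at h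

/-- If `M` is a `d`-torsionfree generator giving an NCR and `gldim End_R(X)` is finite,
then for `c < min(d, grade X)`,
`gldim End_R(M ⊕ Ω^c X) ≤ 2 gldim End_R(M) + gldim End_R(X) + 1`. -/
theorem stmt8 (R : Type u) [CommRing R] [IsNoetherianRing R] (d c : ℕ) (hcd : c < d)
    (M X : ModuleCat.{u} R) [Module.Finite R M] [Module.Finite R X]
    (hM : IsTorsionFree R d M)
    (hgen : MemAdd R M (ModuleCat.of R R))
    (hgrade : ∀ i ≤ c, extZero R i X (ModuleCat.of R R))
    (W : ModuleCat.{u} R) (hW : IsSyzygy R c W X)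
    (a b : ℕ) (ha : gldimLE (Module.End R M) a) (hb : gldimLE (Module.End R X) b) :
    gldimLE (Module.End R (M × W)) (2 * a + b + 1) := by
  obtain ⟨N, -, -, hMN⟩ := hM
  have := hW.finite
  exact stmt8_general R c M X hgen (fun i hi ↦ hMN.subsingleton_ext
    (fun j hj ↦ (hgrade j hj).subsingleton) hi (by lia)) W hW a b ha hb
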